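/- (Claim 2 of the MCE NP-completeness reduction.) Let φ be a 3-CNF formula with n ≥ 1 variables and m ≥ 1 clauses, and consider its MCE gadget graph. If R ⊆ Ê is a union of classes of total weight at most n that connects the source u_1 to the sink b_m, then φ is satisfiable; in particular, for each i exactly one of P_i ⊆ R and N_i ⊆ R holds, and the assignment σ with σ(x_i) = true iff P_i ⊆ R satisfies φ. -/

import Mathlib

/-- A literal over variables `x_1, …, x_n` (indexed by `Fin n`): a variable
index together with a polarity (`true` for `x_i`, `false` for `¬x_i`). -/
structure Lit (n : ℕ) where
  var : Fin n
  pos : Bool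
  deriving DecidableEq

/-- A 3-CNF formula with `n` variables and `m` clauses: clause `j` has three
literals, indexed by `Fin 3`. -/
def CnfFormula (n m : ℕ) := Fin m → Fin 3 → Lit n

/-- The assignment `σ` satisfies the formula `φ`: every clause contains a
literal made true by `σ`. -/
def Satisfies {n m : ℕ} (φ : CnfFormula n m) (σ : Fin n → Bool) : Prop :=
  ∀ j : Fin m, ∃ k : Fin 3, σ (φ j k).var = (φ j k).pos

/-- The nodes of the MCE gadget graph: six nodes per variable gadget and
eight nodes per clause gadget. -/
inductive MceNode (n m : ℕ) : Type
  | u  : Fin n → MceNode n m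
  | ut : Fin n → MceNode n m
  | vt : Fin n → MceNode n m
  | uf : Fin n → MceNode n m
  | vf : Fin n → MceNode n m
  | v  : Fin n → MceNode n m
  | a  : Fin m → MceNode n m
  | ak : Fin m → Fin 3 → MceNode n m
  | bk : Fin m → Fin 3 → MceNode n m
  | b  : Fin m → MceNode n m
  deriving DecidableEq, Fintype

/-- The solid (always present) edges of the MCE gadget graph. -/
inductive SolidEdge (n m : ℕ) : MceNode n m → MceNode n m → Prop
  | u_ut (i : Fin n) : SolidEdge n m (.u i) (.ut i)
  | u_uf (i : Fin n) : SolidEdge n m (.u i) (.uf i)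
  | vt_v (i : Fin n) : SolidEdge n m (.vt i) (.v i)
  | vf_v (i : Fin n) : SolidEdge n m (.vf i) (.v i)
  | a_ak (j : Fin m) (k : Fin 3) : SolidEdge n m (.a j) (.ak j k)
  | bk_b (j : Fin m) (k : Fin 3) : SolidEdge n m (.bk j k) (.b j)
  | v_u (i i' : Fin n) (h : (i : ℕ) + 1 = (i' : ℕ)) : SolidEdge n m (.v i) (.u i')
  | v_a (i : Fin n) (j : Fin m) (hi : (i : ℕ) + 1 = n) (hj : (j : ℕ) = 0) :
      SolidEdge n m (.v i) (.a j)
  | b_a (j j' : Fin m) (h : (j : ℕ) + 1 = (j' : ℕ)) : SolidEdge n m (.b j) (.a j')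

/-- The class `P_i` of candidate edges: the variable edge `(u_i^t, v_i^t)`
together with every clause edge `(a_j^k, b_j^k)` whose literal is `x_i`. -/
def Pclass {n m : ℕ} (φ : CnfFormula n m) (i : Fin n) :
    Finset (MceNode n m × MceNode n m) :=
  {(MceNode.ut i, MceNode.vt i)} ∪
    ((Finset.univ : Finset (Fin m × Fin 3)).filter
        (fun jk => φ jk.1 jk.2 = ⟨i, true⟩)).image
      (fun jk => (MceNode.ak jk.1 jk.2, MceNode.bk jk.1 jk.2))

/-- The class `N_i` of candidate edges: the variable edge `(u_i^f, v_i^f)`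
together with every clause edge `(a_j^k, b_j^k)` whose literal is `¬x_i`. -/
def Nclass {n m : ℕ} (φ : CnfFormula n m) (i : Fin n) :
    Finset (MceNode n m × MceNode n m) :=
  {(MceNode.uf i, MceNode.vf i)} ∪
    ((Finset.univ : Finset (Fin m × Fin 3)).filter
        (fun jk => φ jk.1 jk.2 = ⟨i, false⟩)).image
      (fun jk => (MceNode.ak jk.1 jk.2, MceNode.bk jk.1 jk.2))

/-- The set `Ê` of all candidate edges. -/
def Ehat {n m : ℕ} (φ : CnfFormula n m) : Finset (MceNode n m × MceNode n m) :=
  (Finset.univ : Finset (Fin n)).biUnion (fun i => Pclass φ i ∪ Nclass φ i)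

/-- The weight of a candidate edge: `1` for the variable-gadget edges
`(u_i^t, v_i^t)` and `(u_i^f, v_i^f)`, `0` for the clause-gadget edges. -/
def edgeWeight {n m : ℕ} : MceNode n m × MceNode n m → ℕ
  | (MceNode.ut _, MceNode.vt _) => 1
  | (MceNode.uf _, MceNode.vf _) => 1
  | _ => 0

/-- The total weight of a selection of candidate edges. -/
def selWeight {n m : ℕ} (R : Finset (MceNode n m × MceNode n m)) : ℕ :=
  ∑ e ∈ R, edgeWeight e

/-- `R` is a union of classes: whenever it meets a class `P_i` or `N_i`, it
contains the whole class. -/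
def IsUnionOfClasses {n m : ℕ} (φ : CnfFormula n m)
    (R : Finset (MceNode n m × MceNode n m)) : Prop :=
  ∀ i : Fin n,
    ((Pclass φ i ∩ R).Nonempty → Pclass φ i ⊆ R) ∧
    ((Nclass φ i ∩ R).Nonempty → Nclass φ i ⊆ R)

/-- `R` connects the source `u_1` to the sink `b_m`: there is a directed path
from `u_1` to `b_m` using solid edges together with the edges of `R`. -/
def Connects {n m : ℕ} (hn : 0 < n) (hm : 0 < m)
    (R : Finset (MceNode n m × MceNode n m)) : Prop :=
  Relation.ReflTransGen (fun x y => SolidEdge n m x y ∨ (x, y) ∈ R)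
    (MceNode.u ⟨0, hn⟩) (MceNode.b ⟨m - 1, Nat.sub_lt hm Nat.one_pos⟩)

/-! Let the stage of a node be the number of gadgets that a path from the source has crossed on
reaching it. A solid edge preserves the stage and a candidate edge raises it by one, so a path from
`u_1` (stage `0`) to `b_m` (stage `n + m`) uses a selected edge inside every single gadget. In the
`n` variable gadgets this already costs `n`, so each of them contains exactly one selected edge,
which defines a truth assignment. In a clause gadget the selected edge lies in the class of a
literal of that clause, and this literal is true. -/

variable {n m : ℕ} {φ : CnfFormula n m} {R : Finset (MceNode n m × MceNode n m)}

lemma exists_boundary_rel_of_reflTransGen {α : Type*} {r : α → α → Prop} {p : α → Prop} {x y : α}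
    (h : Relation.ReflTransGen r x y) (hx : p x) (hy : ¬ p y) : ∃ a b, r a b ∧ p a ∧ ¬ p b := by
  induction h with
  | refl => exact absurd hx hy
  | @tail b c _ hbc ih =>
    by_cases hb : p b
    · exact ⟨b, c, hbc, hb, hy⟩
    · exact ih hb

/-- The candidate edge of the variable gadget of `l.var` that makes the literal `l` true:
`(u_i^t, v_i^t)` for `x_i` and `(u_i^f, v_i^f)` for `¬x_i`. -/
def litEdge : Lit n → MceNode n m × MceNode n m
  | ⟨i, true⟩ => (.ut i, .vt i)
  | ⟨i, false⟩ => (.uf i, .vf i)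

/-- The candidate edge `(a_j^k, b_j^k)` of the `k`-th position of the clause gadget `C_j`. -/
def clauseEdge (j : Fin m) (k : Fin 3) : MceNode n m × MceNode n m :=
  (.ak j k, .bk j k)

/-- The class of candidate edges of a literal: `P_i` for `x_i` and `N_i` for `¬x_i`. -/
def litClass (φ : CnfFormula n m) : Lit n → Finset (MceNode n m × MceNode n m)
  | ⟨i, true⟩ => Pclass φ i
  | ⟨i, false⟩ => Nclass φ i

lemma litEdge_injective : Function.Injective (litEdge : Lit n → MceNode n m × MceNode n m) := by
  rintro ⟨_, _ | _⟩ ⟨_, _ | _⟩ h <;> simp_all [litEdge]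

lemma mem_litClass {l : Lit n} {e : MceNode n m × MceNode n m} :
    e ∈ litClass φ l ↔ e = litEdge l ∨ ∃ j k, φ j k = l ∧ e = clauseEdge j k := by
  rcases l with ⟨_, _ | _⟩ <;>
    simp [litClass, Pclass, Nclass, litEdge, clauseEdge, eq_comm (a := e)]

lemma litEdge_mem_litClass (l : Lit n) : litEdge l ∈ litClass φ l :=
  mem_litClass.2 (.inl rfl)

lemma clauseEdge_mem_litClass (φ : CnfFormula n m) (j : Fin m) (k : Fin 3) :
    clauseEdge j k ∈ litClass φ (φ j k) :=
  mem_litClass.2 (.inr ⟨j, k, rfl, rfl⟩)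

lemma exists_litEdge_or_clauseEdge_of_mem_Ehat {e : MceNode n m × MceNode n m} (he : e ∈ Ehat φ) :
    (∃ l, e = litEdge l) ∨ ∃ j k, e = clauseEdge j k := by
  have hclass : ∃ l, e ∈ litClass φ l := by
    obtain ⟨i, -, hi⟩ := Finset.mem_biUnion.1 he
    rcases Finset.mem_union.1 hi with hP | hN
    · exact ⟨⟨i, true⟩, hP⟩
    · exact ⟨⟨i, false⟩, hN⟩
  obtain ⟨l, hl⟩ := hclass
  exact (mem_litClass.1 hl).imp (⟨l, ·⟩) fun ⟨j, k, _, hjk⟩ ↦ ⟨j, k, hjk⟩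

lemma IsUnionOfClasses.litClass_subset (hR : IsUnionOfClasses φ R) {l : Lit n}
    {e : MceNode n m × MceNode n m} (he : e ∈ litClass φ l) (heR : e ∈ R) :
    litClass φ l ⊆ R := by
  have hmeet : (litClass φ l ∩ R).Nonempty := ⟨e, Finset.mem_inter.2 ⟨he, heR⟩⟩
  rcases l with ⟨i, _ | _⟩
  · exact (hR i).2 hmeet
  · exact (hR i).1 hmeet

lemma IsUnionOfClasses.litClass_subset_iff (hR : IsUnionOfClasses φ R) {l : Lit n} :
    litClass φ l ⊆ R ↔ litEdge l ∈ R :=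
  ⟨fun h ↦ h (litEdge_mem_litClass l), hR.litClass_subset (litEdge_mem_litClass l)⟩

/-- The number of gadgets crossed by a path from the source to the given node. With 0-based
indices the `i`-th variable gadget leads from stage `i` to `i + 1`, and the `j`-th clause gadget
from stage `n + j` to `n + j + 1`. -/
def MceNode.stage : MceNode n m → ℕ
  | .u i | .ut i | .uf i => i
  | .vt i | .vf i | .v i => i + 1
  | .a j | .ak j _ => n + j
  | .bk j _ | .b j => n + j + 1

lemma SolidEdge.stage_eq {x y : MceNode n m} (h : SolidEdge n m x y) : x.stage = y.stage := by
  cases h <;> simp only [MceNode.stage] <;> lia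

lemma stage_litEdge_fst (l : Lit n) : (litEdge l : MceNode n m × MceNode n m).1.stage = l.var := by
  rcases l with ⟨_, _ | _⟩ <;> rfl

lemma stage_snd_of_mem_Ehat {e : MceNode n m × MceNode n m} (he : e ∈ Ehat φ) :
    e.2.stage = e.1.stage + 1 := by
  rcases exists_litEdge_or_clauseEdge_of_mem_Ehat he with ⟨⟨_, _ | _⟩, rfl⟩ | ⟨_, _, rfl⟩ <;> rfl

lemma exists_mem_stage_fst_eq_of_reflTransGen (hsub : R ⊆ Ehat φ) {x y : MceNode n m} {s : ℕ}
    (hpath : Relation.ReflTransGen (fun x y ↦ SolidEdge n m x y ∨ (x, y) ∈ R) x y)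
    (hx : x.stage ≤ s) (hy : s < y.stage) : ∃ e ∈ R, e.1.stage = s := by
  obtain ⟨a, b, hab, ha, hb⟩ :=
    exists_boundary_rel_of_reflTransGen (p := (·.stage ≤ s)) hpath hx hy.not_ge
  rcases hab with hsolid | hmem
  · exact absurd (hsolid.stage_eq ▸ ha) hb
  · have hstage : b.stage = a.stage + 1 := stage_snd_of_mem_Ehat (hsub hmem)
    exact ⟨(a, b), hmem, by dsimp only; lia⟩

lemma Connects.exists_mem_stage_fst_eq {hn : 0 < n} {hm : 0 < m} (hconn : Connects hn hm R)
    (hsub : R ⊆ Ehat φ) {s : ℕ} (hs : s < n + m) : ∃ e ∈ R, e.1.stage = s :=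
  exists_mem_stage_fst_eq_of_reflTransGen hsub hconn (Nat.zero_le s)
    (by simp only [MceNode.stage]; lia)

lemma Connects.exists_litEdge_mem {hn : 0 < n} {hm : 0 < m} (hconn : Connects hn hm R)
    (hsub : R ⊆ Ehat φ) (i : Fin n) : ∃ b, litEdge ⟨i, b⟩ ∈ R := by
  obtain ⟨e, heR, hstage⟩ := hconn.exists_mem_stage_fst_eq hsub (s := i) (by lia)
  rcases exists_litEdge_or_clauseEdge_of_mem_Ehat (hsub heR) with ⟨⟨i', b⟩, rfl⟩ | ⟨j, k, rfl⟩
  · obtain rfl : i' = i := Fin.ext ((stage_litEdge_fst ⟨i', b⟩).symm.trans hstage)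
    exact ⟨b, heR⟩
  · simp only [clauseEdge, MceNode.stage] at hstage
    lia

lemma Connects.exists_clauseEdge_mem {hn : 0 < n} {hm : 0 < m} (hconn : Connects hn hm R)
    (hsub : R ⊆ Ehat φ) (j : Fin m) : ∃ k, clauseEdge j k ∈ R := by
  obtain ⟨e, heR, hstage⟩ := hconn.exists_mem_stage_fst_eq hsub (s := n + j) (by lia)
  rcases exists_litEdge_or_clauseEdge_of_mem_Ehat (hsub heR) with ⟨l, rfl⟩ | ⟨j', k, rfl⟩
  · rw [stage_litEdge_fst] at hstage
    lia
  · obtain rfl : j' = j := Fin.ext (Nat.add_left_cancel hstage)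
    exact ⟨k, heR⟩

lemma edgeWeight_litEdge (l : Lit n) :
    edgeWeight (litEdge l : MceNode n m × MceNode n m) = 1 := by
  rcases l with ⟨_, _ | _⟩ <;> rfl

lemma sum_card_litEdge_mem_le_selWeight (R : Finset (MceNode n m × MceNode n m)) :
    ∑ i : Fin n, Fintype.card {b : Bool // litEdge ⟨i, b⟩ ∈ R} ≤ selWeight R := by
  let f : ((_ : Fin n) × Bool) → MceNode n m × MceNode n m := fun p ↦ litEdge ⟨p.1, p.2⟩
  have hf : Function.Injective f := by
    rintro ⟨i, b⟩ ⟨i', b'⟩ h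
    cases litEdge_injective h
    rfl
  let L : Finset ((_ : Fin n) × Bool) := Finset.univ.sigma fun i ↦ {b | litEdge ⟨i, b⟩ ∈ R}
  have hL : L.image f ⊆ R := by
    simp [L, f, Finset.image_subset_iff]
  calc ∑ i : Fin n, Fintype.card {b : Bool // litEdge ⟨i, b⟩ ∈ R}
      = L.card := by simp only [L, Finset.card_sigma, Fintype.card_subtype]
    _ = ∑ p ∈ L, edgeWeight (f p) := by simp only [f, edgeWeight_litEdge, Finset.card_eq_sum_ones]
    _ = ∑ e ∈ L.image f, edgeWeight e := (Finset.sum_image hf.injOn).symm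
    _ ≤ selWeight R := Finset.sum_le_sum_of_subset hL

lemma existsUnique_litEdge_mem (hweight : selWeight R ≤ n)
    (hex : ∀ i : Fin n, ∃ b, litEdge ⟨i, b⟩ ∈ R) (i : Fin n) : ∃! b, litEdge ⟨i, b⟩ ∈ R := by
  have hpos : ∀ i ∈ Finset.univ, 1 ≤ Fintype.card {b : Bool // litEdge ⟨i, b⟩ ∈ R} := fun i _ ↦
    Fintype.card_pos_iff.2 (nonempty_subtype.2 (hex i))
  have hsum : ∑ _i : Fin n, 1 = ∑ i : Fin n, Fintype.card {b : Bool // litEdge ⟨i, b⟩ ∈ R} := by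
    refine (Finset.sum_le_sum hpos).antisymm ?_
    simpa using (sum_card_litEdge_mem_le_selWeight R).trans hweight
  have hone := (Finset.sum_eq_sum_iff_of_le hpos).1 hsum i (Finset.mem_univ i)
  rwa [Fintype.existsUnique_iff_card_one, ← Fintype.card_subtype, eq_comm]

lemma decide_Pclass_subset_eq {l : Lit n} (huniq : ∃! b, litClass φ ⟨l.var, b⟩ ⊆ R)
    (hl : litClass φ l ⊆ R) : decide (Pclass φ l.var ⊆ R) = l.pos := by
  rcases l with ⟨_, _ | _⟩
  · exact decide_eq_false fun hP ↦ nomatch huniq.unique (y₁ := true) hP hl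
  · exact decide_eq_true hl

/-- Claim 2 of the MCE NP-completeness reduction: if a union of classes
`R ⊆ Ê` of total weight at most `n` connects the source to the sink, then for
each `i` exactly one of `P_i ⊆ R` and `N_i ⊆ R` holds, and the assignment
`σ` with `σ(x_i) = true` iff `P_i ⊆ R` satisfies `φ` (in particular `φ` is
satisfiable). -/
theorem mce_claim2 {n m : ℕ} (hn : 0 < n) (hm : 0 < m)
    (φ : CnfFormula n m) (R : Finset (MceNode n m × MceNode n m))
    (hsub : R ⊆ Ehat φ)
    (hclasses : IsUnionOfClasses φ R)
    (hweight : selWeight R ≤ n)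
    (hconn : Connects hn hm R) :
    (∀ i : Fin n,
        (Pclass φ i ⊆ R ∧ ¬ Nclass φ i ⊆ R) ∨
        (¬ Pclass φ i ⊆ R ∧ Nclass φ i ⊆ R)) ∧
    Satisfies φ (fun i => decide (Pclass φ i ⊆ R)) := by
  have huniq (i : Fin n) : ∃! b, litClass φ ⟨i, b⟩ ⊆ R := by
    simpa only [hclasses.litClass_subset_iff] using
      existsUnique_litEdge_mem hweight (hconn.exists_litEdge_mem hsub) i
  refine ⟨fun i ↦ ?_, fun j ↦ ?_⟩
  · obtain ⟨_ | _, hb, hunique⟩ := huniq i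
    · exact .inr ⟨fun hP ↦ (nomatch hunique true hP), hb⟩
    · exact .inl ⟨hb, fun hN ↦ (nomatch hunique false hN)⟩
  · obtain ⟨k, hk⟩ := hconn.exists_clauseEdge_mem hsub j
    have htrue : litClass φ (φ j k) ⊆ R :=
      hclasses.litClass_subset (clauseEdge_mem_litClass φ j k) hk
    exact ⟨k, decide_Pclass_subset_eq (huniq _) htrue⟩
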